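/- arXiv:2405.04047 — 6 statements merged into one kernel-verified Lean document; each statement's English description precedes it below -/
import Mathlib

section
/- Under these assumptions, set λ* := c2·min(σ²·c1, (λ − K − L/2)·ℓ0) / (1 − exp(−c1·ℓ0) + c2·ℓ0). Then for every r ≥ 0 one has ψ(r) ≤ −λ*·f(r). -/
/-!
The profile `F r = 1 - exp (-c r) + c exp (-c l) r` is increasing and concave with `F 0 = 0`, so
`F r ≤ F l` for `r ≤ l` and `F r ≤ (r / l) F l` for `l ≤ r`. For `r ≤ l`, half of the second-order
term `2 σ² F''` absorbs a drift of at most `σ² c / 2`, because `F' r ≤ 2 c exp (-c r)`, and the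
other half is at most `-c exp (-c l) σ² c`. For `r > l` the drift points inwards and the linear
part of `F` alone yields `-c exp (-c l) κ r`. The rate is the smaller of these two bounds,
normalised by `F l`.
-/

open Set

theorem mul_le_mul_of_concaveOn_of_nonneg_zero {F : ℝ → ℝ} {l r : ℝ}
    (hF : ConcaveOn ℝ (Ici 0) F) (hF0 : 0 ≤ F 0) (hl : 0 ≤ l) (hlr : l ≤ r) :
    l * F r ≤ r * F l := by
  rcases hl.eq_or_lt with rfl | hl
  · simpa using mul_nonneg hlr hF0
  have hr : 0 < r := hl.trans_le hlr
  have hchord : (l / r) * F r + (1 - l / r) * F 0 ≤ F l := by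
    simpa [hr.ne'] using hF.2 (mem_Ici.2 hr.le) self_mem_Ici (by positivity)
      (sub_nonneg.2 ((div_le_one hr).2 hlr)) (add_sub_cancel _ _)
  have hzero : 0 ≤ (1 - l / r) * F 0 :=
    mul_nonneg (sub_nonneg.2 ((div_le_one hr).2 hlr)) hF0
  calc
    l * F r = r * ((l / r) * F r) := by field_simp
    _ ≤ r * F l := by gcongr; linarith

/-- The concave distance function `F` used as Lyapunov function for the coupling by reflection.
The slope of its linear part is that of `1 - exp (-c r)` at the threshold `r = l`. -/
noncomputable def reflectionProfile (c l r : ℝ) : ℝ :=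
  1 - Real.exp (-c * r) + c * Real.exp (-c * l) * r

section Profile

variable {c l r : ℝ}

theorem reflectionProfile_zero : reflectionProfile c l 0 = 0 := by
  simp [reflectionProfile]

theorem monotone_reflectionProfile (hc : 0 ≤ c) : Monotone (reflectionProfile c l) := by
  intro x y hxy
  simp only [reflectionProfile, neg_mul]
  gcongr

theorem reflectionProfile_pos (hc : 0 < c) (hr : 0 < r) : 0 < reflectionProfile c l r := by
  have hexp : Real.exp (-c * r) < 1 :=
    Real.exp_lt_one_iff.2 (mul_neg_of_neg_of_pos (neg_neg_of_pos hc) hr)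
  have hlinear : 0 < c * Real.exp (-c * l) * r := by positivity
  unfold reflectionProfile
  linarith

theorem concaveOn_reflectionProfile : ConcaveOn ℝ univ (reflectionProfile c l) := by
  have hexp : ConvexOn ℝ univ fun r => Real.exp (-c * r) :=
    convexOn_exp.comp_linearMap (LinearMap.mulLeft ℝ (-c))
  have hlinear : ConcaveOn ℝ univ fun r => c * Real.exp (-c * l) * r :=
    (LinearMap.mulLeft ℝ (c * Real.exp (-c * l))).concaveOn convex_univ
  exact ((concaveOn_const 1 convex_univ).sub hexp).add hlinear

theorem hasDerivAt_exp_neg_mul (c r : ℝ) :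
    HasDerivAt (fun r => Real.exp (-c * r)) (-(c * Real.exp (-c * r))) r := by
  simpa [mul_comm] using ((hasDerivAt_id r).const_mul (-c)).exp

theorem deriv_reflectionProfile :
    deriv (reflectionProfile c l) =
      fun r => c * Real.exp (-c * r) + c * Real.exp (-c * l) := by
  funext r
  have h : HasDerivAt (reflectionProfile c l)
      (- -(c * Real.exp (-c * r)) + c * Real.exp (-c * l) * 1) r :=
    ((hasDerivAt_exp_neg_mul c r).const_sub 1).add
      ((hasDerivAt_id r).const_mul (c * Real.exp (-c * l)))
  rw [h.deriv, neg_neg, mul_one]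

theorem deriv_deriv_reflectionProfile :
    deriv (deriv (reflectionProfile c l)) = fun r => -(c ^ 2) * Real.exp (-c * r) := by
  funext r
  rw [deriv_reflectionProfile, (((hasDerivAt_exp_neg_mul c r).const_mul c).add_const _).deriv]
  ring

end Profile

/-- The generator, applied to `F`, of the distance process `dr = b(r) dt + 2 σ dW` of two copies
coupled by reflection. -/
noncomputable def radialGenerator (σ : ℝ) (b F : ℝ → ℝ) (r : ℝ) : ℝ :=
  deriv F r * b r + 2 * σ ^ 2 * deriv (deriv F) r

/-- The exponential rate `λ*` at which the reflection profile decays, when the inward drift beyond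
the threshold `l` is at least `κ r`. -/
noncomputable def contractionRate (σ κ c l : ℝ) : ℝ :=
  c * Real.exp (-c * l) * min (σ ^ 2 * c) (κ * l) / reflectionProfile c l l

section Generator

variable {σ κ c l r : ℝ} {b : ℝ → ℝ}

theorem radialGenerator_reflectionProfile :
    radialGenerator σ b (reflectionProfile c l) r =
      (c * Real.exp (-c * r) + c * Real.exp (-c * l)) * b r +
        2 * σ ^ 2 * (-(c ^ 2) * Real.exp (-c * r)) := by
  rw [radialGenerator, deriv_deriv_reflectionProfile, deriv_reflectionProfile]

theorem radialGenerator_reflectionProfile_le_of_le (hc : 0 ≤ c) (hrl : r ≤ l)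
    (hb : b r ≤ σ ^ 2 * c / 2) :
    radialGenerator σ b (reflectionProfile c l) r ≤
      -(c * Real.exp (-c * l) * (σ ^ 2 * c)) := by
  have hexp : Real.exp (-c * l) ≤ Real.exp (-c * r) := by
    simp only [neg_mul]
    gcongr
  rw [radialGenerator_reflectionProfile]
  calc
    _ ≤ (c * Real.exp (-c * r) + c * Real.exp (-c * r)) * (σ ^ 2 * c / 2) +
        2 * σ ^ 2 * (-(c ^ 2) * Real.exp (-c * r)) := by
      gcongr ?_ + _
      exact (mul_le_mul_of_nonneg_left hb (by positivity)).trans (by gcongr)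
    _ = -(c * Real.exp (-c * r) * (σ ^ 2 * c)) := by ring
    _ ≤ -(c * Real.exp (-c * l) * (σ ^ 2 * c)) := by gcongr

theorem radialGenerator_reflectionProfile_le_of_drift_le (hc : 0 ≤ c) (hκ : 0 ≤ κ) (hr : 0 ≤ r)
    (hb : b r ≤ -(κ * r)) :
    radialGenerator σ b (reflectionProfile c l) r ≤ -(c * Real.exp (-c * l) * (κ * r)) := by
  have hdrift : (c * Real.exp (-c * r) + c * Real.exp (-c * l)) * b r ≤
      (c * Real.exp (-c * r) + c * Real.exp (-c * l)) * -(κ * r) := by gcongr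
  have hinward : 0 ≤ c * Real.exp (-c * r) * (κ * r) := by positivity
  have hconcave : 0 ≤ σ ^ 2 * (c ^ 2 * Real.exp (-c * r)) := by positivity
  rw [radialGenerator_reflectionProfile]
  linarith

theorem contractionRate_nonneg (hc : 0 < c) (hl : 0 < l) (hκ : 0 ≤ κ) :
    0 ≤ contractionRate σ κ c l := by
  have := reflectionProfile_pos (l := l) hc hl
  unfold contractionRate
  positivity

theorem contractionRate_mul_reflectionProfile_self (hc : 0 < c) (hl : 0 < l) :
    contractionRate σ κ c l * reflectionProfile c l l =
      c * Real.exp (-c * l) * min (σ ^ 2 * c) (κ * l) :=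
  div_mul_cancel₀ _ (reflectionProfile_pos hc hl).ne'

theorem contractionRate_mul_reflectionProfile_le_of_le (hc : 0 < c) (hl : 0 < l) (hκ : 0 ≤ κ)
    (hrl : r ≤ l) :
    contractionRate σ κ c l * reflectionProfile c l r ≤ c * Real.exp (-c * l) * (σ ^ 2 * c) :=
  calc
    _ ≤ contractionRate σ κ c l * reflectionProfile c l l :=
      mul_le_mul_of_nonneg_left (monotone_reflectionProfile hc.le hrl)
        (contractionRate_nonneg hc hl hκ)
    _ = c * Real.exp (-c * l) * min (σ ^ 2 * c) (κ * l) :=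
      contractionRate_mul_reflectionProfile_self hc hl
    _ ≤ c * Real.exp (-c * l) * (σ ^ 2 * c) := by gcongr; exact min_le_left _ _

theorem contractionRate_mul_reflectionProfile_le_of_ge (hc : 0 < c) (hl : 0 < l) (hκ : 0 ≤ κ)
    (hlr : l ≤ r) :
    contractionRate σ κ c l * reflectionProfile c l r ≤ c * Real.exp (-c * l) * (κ * r) := by
  have hray : l * reflectionProfile c l r ≤ r * reflectionProfile c l l :=
    mul_le_mul_of_concaveOn_of_nonneg_zero
      (concaveOn_reflectionProfile.subset (subset_univ _) (convex_Ici 0))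
      reflectionProfile_zero.ge hl.le hlr
  have hr : 0 ≤ r := hl.le.trans hlr
  refine le_of_mul_le_mul_left ?_ hl
  calc
    l * (contractionRate σ κ c l * reflectionProfile c l r)
        = contractionRate σ κ c l * (l * reflectionProfile c l r) := by ring
    _ ≤ contractionRate σ κ c l * (r * reflectionProfile c l l) :=
      mul_le_mul_of_nonneg_left hray (contractionRate_nonneg hc hl hκ)
    _ = r * (c * Real.exp (-c * l) * min (σ ^ 2 * c) (κ * l)) := by
      rw [mul_left_comm, contractionRate_mul_reflectionProfile_self hc hl]
    _ ≤ r * (c * Real.exp (-c * l) * (κ * l)) := by gcongr; exact min_le_right _ _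
    _ = l * (c * Real.exp (-c * l) * (κ * r)) := by ring

theorem stmt_0_general (hl : 0 < l) (hc : 0 < c) (hκ : 0 ≤ κ) (hr : 0 ≤ r)
    (hnear : r ≤ l → b r ≤ σ ^ 2 * c / 2) (hfar : l < r → b r ≤ -(κ * r)) :
    radialGenerator σ b (reflectionProfile c l) r ≤
      -contractionRate σ κ c l * reflectionProfile c l r := by
  rw [neg_mul]
  rcases le_or_gt r l with hrl | hlr
  · exact (radialGenerator_reflectionProfile_le_of_le hc.le hrl (hnear hrl)).trans
      (neg_le_neg (contractionRate_mul_reflectionProfile_le_of_le hc hl hκ hrl))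
  · exact (radialGenerator_reflectionProfile_le_of_drift_le hc.le hκ hr (hfar hlr)).trans
      (neg_le_neg (contractionRate_mul_reflectionProfile_le_of_ge hc hl hκ hlr.le))

end Generator

/-- The drift of the distance process in the coupling by reflection: the factor of `F'` in `ψ`,
with `lam` and `l` for the paper's `λ` and `ℓ0`. -/
noncomputable def couplingDrift (φ : ℝ → ℝ) (K L lam l r : ℝ) : ℝ :=
  (if r ≤ l then φ r + lam * r else 0) - (lam - K - L / 2) * r

section Drift

variable {φ : ℝ → ℝ} {K L lam l r : ℝ}

theorem couplingDrift_le_of_le (hφ : MonotoneOn φ (Icc 0 l)) (hKL : 0 ≤ K + L / 2)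
    (hr : 0 ≤ r) (hrl : r ≤ l) :
    couplingDrift φ K L lam l r ≤ φ l + (K + L / 2) * l :=
  calc
    couplingDrift φ K L lam l r = φ r + (K + L / 2) * r := by
      rw [couplingDrift, if_pos hrl]
      ring
    _ ≤ φ l + (K + L / 2) * l := by
      gcongr
      exact hφ ⟨hr, hrl⟩ ⟨hr.trans hrl, le_rfl⟩ hrl

theorem couplingDrift_of_lt (hlr : l < r) :
    couplingDrift φ K L lam l r = -((lam - K - L / 2) * r) := by
  rw [couplingDrift, if_neg hlr.not_ge, zero_sub]

end Drift

theorem stmt_0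
    (l0 sigma K L lam : ℝ) (φ : ℝ → ℝ)
    (hl0 : 0 < l0) (hsigma : sigma ≠ 0) (hK : 0 ≤ K) (hL : 0 ≤ L)
    (hlam : K + L / 2 < lam)
    (hφ0 : φ 0 = 0) (hφmono : MonotoneOn φ (Set.Ici 0))
    (hφcont : ContinuousOn φ (Set.Ici 0))
    (hφnonneg : ∀ r, 0 ≤ r → 0 ≤ φ r)
    (c1 c2 lamStar : ℝ) (f ψ : ℝ → ℝ)
    (hc1 : c1 = (2 * φ l0 + (L + 2 * K) * l0) / sigma ^ 2)
    (hc1pos : 0 < c1)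
    (hc2 : c2 = c1 * Real.exp (-c1 * l0))
    (hf : ∀ r, f r = 1 - Real.exp (-c1 * r) + c2 * r)
    (hψ : ∀ r, ψ r =
      (c1 * Real.exp (-c1 * r) + c2) *
        ((if r ≤ l0 then φ r + lam * r else 0) - (lam - K - L / 2) * r)
      + 2 * sigma ^ 2 * (-(c1 ^ 2) * Real.exp (-c1 * r)))
    (hlamStar : lamStar =
      c2 * min (sigma ^ 2 * c1) ((lam - K - L / 2) * l0) /
        (1 - Real.exp (-c1 * l0) + c2 * l0)) :
    ∀ r, 0 ≤ r → ψ r ≤ -lamStar * f r := by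
  intro r hr
  have hnear : r ≤ l0 → couplingDrift φ K L lam l0 r ≤ sigma ^ 2 * c1 / 2 := fun hrl =>
    calc
      couplingDrift φ K L lam l0 r ≤ φ l0 + (K + L / 2) * l0 :=
        couplingDrift_le_of_le (hφmono.mono Icc_subset_Ici_self) (by positivity) hr hrl
      _ = sigma ^ 2 * c1 / 2 := by rw [hc1]; field_simp; ring
  have hκ : 0 ≤ lam - K - L / 2 := by linarith
  have hfar : l0 < r → couplingDrift φ K L lam l0 r ≤ -((lam - K - L / 2) * r) := fun hlr =>
    (couplingDrift_of_lt hlr).le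
  simpa only [radialGenerator_reflectionProfile, reflectionProfile, contractionRate, couplingDrift,
    hψ, hf, hlamStar, hc2] using stmt_0_general hl0 hc1pos hκ hr hnear hfar
end

section
/- For every r > ℓ0 one has ψ(r) ≤ −c2·(λ − K − L/2)·r, and consequently ψ(r) ≤ −(c2·(λ − K − L/2)·ℓ0 / (1 − exp(−c1·ℓ0) + c2·ℓ0))·f(r). -/
/-!
On `(ℓ0, ∞)` the indicator in `ψ` vanishes, leaving `ψ(r) = -κ r f'(r) + 2σ² f''(r)` with
`κ = λ - K - L/2`; since `f' ≥ c2` and `f'' ≤ 0`, this is at most `-c2 κ r`. As `f` is concave with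
`f(0) = 0`, the ratio `f(r) / r` is antitone, so `r ≥ (ℓ0 / f(ℓ0)) f(r)`, which turns the linear
bound into a bound by a multiple of `f`.
-/

open Real Set

section Concave

variable {𝕜 : Type*} [Field 𝕜] [LinearOrder 𝕜] [IsStrictOrderedRing 𝕜] {s : Set 𝕜} {f : 𝕜 → 𝕜}

theorem antitoneOn_div_of_concaveOn (hf : ConcaveOn 𝕜 s f) (h0 : 0 ∈ s) (hf0 : 0 ≤ f 0) :
    AntitoneOn (fun x ↦ f x / x) (s ∩ Ioi 0) := by
  rintro x ⟨hxs, hx : 0 < x⟩ y ⟨hys, hy : 0 < y⟩ hxy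
  have secant_le : (f y - f 0) / (y - 0) ≤ (f x - f 0) / (x - 0) := by
    simpa only [slope_def_field] using hf.slope_anti h0 ⟨hxs, hx.ne'⟩ ⟨hys, hy.ne'⟩ hxy
  have offset_le : f 0 / y ≤ f 0 / x := by gcongr
  calc f y / y = (f y - f 0) / (y - 0) + f 0 / y := by ring
    _ ≤ (f x - f 0) / (x - 0) + f 0 / x := add_le_add secant_le offset_le
    _ = f x / x := by ring

theorem div_mul_le_of_concaveOn (hf : ConcaveOn 𝕜 s f) (h0 : 0 ∈ s) (hf0 : 0 ≤ f 0) {x y : 𝕜}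
    (hxs : x ∈ s) (hys : y ∈ s) (hx : 0 < x) (hxy : x ≤ y) (hfx : 0 < f x) :
    x / f x * f y ≤ y := by
  have hy : 0 < y := hx.trans_le hxy
  have ratio_le : f y / y ≤ f x / x :=
    antitoneOn_div_of_concaveOn hf h0 hf0 ⟨hxs, hx⟩ ⟨hys, hy⟩ hxy
  calc x / f x * f y = x / f x * (f y / y) * y := by field_simp
    _ ≤ x / f x * (f x / x) * y := by gcongr
    _ = y := by field_simp

end Concave

theorem concaveOn_one_sub_exp_add_linear (a b : ℝ) :
    ConcaveOn ℝ univ fun r ↦ 1 - exp (-a * r) + b * r := by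
  have exp_convex : ConvexOn ℝ univ fun r ↦ exp (-a * r) :=
    convexOn_exp.comp_linearMap (LinearMap.mulLeft ℝ (-a))
  have linear_concave : ConcaveOn ℝ univ fun r : ℝ ↦ b * r :=
    (LinearMap.mulLeft ℝ b).concaveOn convex_univ
  exact ((concaveOn_const 1 convex_univ).sub exp_convex).add linear_concave

theorem one_sub_exp_add_linear_pos {a b r : ℝ} (ha : 0 < a) (hb : 0 ≤ b) (hr : 0 < r) :
    0 < 1 - exp (-a * r) + b * r := by
  have exp_lt_one : exp (-a * r) < 1 :=
    exp_lt_one_iff.mpr (mul_neg_of_neg_of_pos (neg_neg_of_pos ha) hr)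
  exact add_pos_of_pos_of_nonneg (sub_pos.mpr exp_lt_one) (mul_nonneg hb hr.le)

theorem drift_add_diffusion_le {slope curvature c m D : ℝ} (hslope : c ≤ slope)
    (hcurvature : curvature ≤ 0) (hm : 0 ≤ m) (hD : 0 ≤ D) :
    slope * -m + D * curvature ≤ -c * m := by
  have drift_le : slope * -m ≤ -c * m := by
    rw [mul_neg, neg_mul]
    gcongr
  have diffusion_nonpos : D * curvature ≤ 0 := mul_nonpos_of_nonneg_of_nonpos hD hcurvature
  linarith

theorem stmt_2_general {l0 c1 c2 κ σ : ℝ} {g f ψ : ℝ → ℝ}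
    (hl0 : 0 < l0) (hc1 : 0 < c1) (hc2 : 0 ≤ c2) (hκ : 0 ≤ κ)
    (hf : ∀ r, f r = 1 - exp (-c1 * r) + c2 * r)
    (hψ : ∀ r, ψ r =
      (c1 * exp (-c1 * r) + c2) * ((if r ≤ l0 then g r else 0) - κ * r)
        + 2 * σ ^ 2 * (-(c1 ^ 2) * exp (-c1 * r)))
    {r : ℝ} (hr : l0 < r) :
    ψ r ≤ -c2 * κ * r ∧
      ψ r ≤ -(c2 * κ * l0 / (1 - exp (-c1 * l0) + c2 * l0)) * f r := by
  have hr0 : 0 < r := hl0.trans hr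
  have linear_bound : ψ r ≤ -c2 * κ * r := by
    have slope_ge : c2 ≤ c1 * exp (-c1 * r) + c2 := le_add_of_nonneg_left (by positivity)
    have curvature_nonpos : -(c1 ^ 2) * exp (-c1 * r) ≤ 0 :=
      mul_nonpos_of_nonpos_of_nonneg (neg_nonpos.mpr (sq_nonneg c1)) (exp_nonneg _)
    rw [hψ, if_neg hr.not_ge, zero_sub, mul_assoc (-c2)]
    exact drift_add_diffusion_le slope_ge curvature_nonpos (mul_nonneg hκ hr0.le) (by positivity)
  refine ⟨linear_bound, linear_bound.trans ?_⟩
  rw [← hf l0]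
  have f_concave : ConcaveOn ℝ univ f := funext hf ▸ concaveOn_one_sub_exp_add_linear c1 c2
  have f_l0_pos : 0 < f l0 := hf l0 ▸ one_sub_exp_add_linear_pos hc1 hc2 hl0
  have f_le : l0 / f l0 * f r ≤ r :=
    div_mul_le_of_concaveOn f_concave (mem_univ 0) (by simp [hf]) (mem_univ l0) (mem_univ r)
      hl0 hr.le f_l0_pos
  calc -c2 * κ * r = -(c2 * κ * r) := by ring
    _ ≤ -(c2 * κ * (l0 / f l0 * f r)) := by gcongr
    _ = -(c2 * κ * l0 / f l0) * f r := by ring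

/- Long-range estimate: for r > ℓ0, ψ(r) ≤ −c2·(λ − K − L/2)·r, and consequently
   ψ(r) ≤ −(c2·(λ − K − L/2)·ℓ0 / (1 − exp(−c1·ℓ0) + c2·ℓ0))·f(r). -/
theorem stmt_2
    (l0 sigma K L lam : ℝ) (φ : ℝ → ℝ)
    (hl0 : 0 < l0) (hsigma : sigma ≠ 0) (hK : 0 ≤ K) (hL : 0 ≤ L)
    (hlam : K + L / 2 < lam)
    (hφ0 : φ 0 = 0) (hφmono : MonotoneOn φ (Set.Ici 0))
    (hφcont : ContinuousOn φ (Set.Ici 0))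
    (hφnonneg : ∀ r, 0 ≤ r → 0 ≤ φ r)
    (c1 c2 : ℝ) (f ψ : ℝ → ℝ)
    (hc1 : c1 = (2 * φ l0 + (L + 2 * K) * l0) / sigma ^ 2)
    (hc1pos : 0 < c1)
    (hc2 : c2 = c1 * Real.exp (-c1 * l0))
    (hf : ∀ r, f r = 1 - Real.exp (-c1 * r) + c2 * r)
    (hψ : ∀ r, ψ r =
      (c1 * Real.exp (-c1 * r) + c2) *
        ((if r ≤ l0 then φ r + lam * r else 0) - (lam - K - L / 2) * r)
      + 2 * sigma ^ 2 * (-(c1 ^ 2) * Real.exp (-c1 * r))) :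
    ∀ r, l0 < r →
      ψ r ≤ -c2 * (lam - K - L / 2) * r ∧
      ψ r ≤ -(c2 * (lam - K - L / 2) * l0 /
        (1 - Real.exp (-c1 * l0) + c2 * l0)) * f r := by
  have hc2_nonneg : 0 ≤ c2 := hc2 ▸ by positivity
  exact fun r hr ↦ stmt_2_general hl0 hc1pos hc2_nonneg (by linarith) hf hψ hr
end

section
/- Let λ* := c2·min(σ²·c1, (λ − K − L/2)·ℓ0) / (1 − exp(−c1·ℓ0) + c2·ℓ0). Let ε > 0 and let h : [0,∞) → [0,1] be any function with h(r) = 1 for all r ≥ 2ε. Then for every r ≥ 0, (λ*·f(r) + f′(r)·((φ(r) + λ·r)·𝟙_{r ≤ ℓ0} − (λ − K − L/2)·r))·(1 − h(r)²) ≤ 2·(c1 + c2)·(2·(λ* + K + L/2)·ε + φ(2ε)). -/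
/-!
The distortion `f` is concave with `f 0 = 0`, so `f r ≤ f' 0 * r` and `0 ≤ f' r ≤ f' 0`, where
`f' 0 = c1 + c2`. The drift is at most `φ r + (K + L / 2) * r`: the terms in `lam` cancel for
`r ≤ l0` and only help beyond `l0`. Hence the first factor is at most
`f' 0 * ((lamStar + K + L / 2) * r + φ r)`. The second factor lies in `[0, 1]` and vanishes for
`2 * ε ≤ r`, and for smaller `r` monotonicity allows replacing `r` by `2 * ε`.
-/

open Set

section ConcaveDistortion

variable {f f' : ℝ → ℝ} {r : ℝ}

theorem concaveOn_le_add_mul_sub {s : Set ℝ} {d x y : ℝ} (hf : ConcaveOn ℝ s f)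
    (hx : x ∈ s) (hy : y ∈ s) (hd : HasDerivWithinAt f d s x) : f y ≤ f x + d * (y - x) := by
  rcases lt_trichotomy x y with hxy | rfl | hyx
  · have hslope : slope f x y ≤ d := hf.slope_le_of_hasDerivWithinAt hx hy hxy hd
    rw [slope_def_field, div_le_iff₀ (sub_pos.2 hxy)] at hslope
    linarith
  · simp
  · have hslope : d ≤ slope f y x := hf.le_slope_of_hasDerivWithinAt hy hx hyx hd
    rw [slope_def_field, le_div_iff₀ (sub_pos.2 hyx)] at hslope
    linarith

theorem antitoneOn_of_concaveOn_of_hasDerivWithinAt {s : Set ℝ} (hf : ConcaveOn ℝ s f)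
    (hf' : ∀ x ∈ s, HasDerivWithinAt f (f' x) s x) : AntitoneOn f' s := by
  intro x hx y hy hxy
  rcases hxy.eq_or_lt with rfl | hxy
  · rfl
  · exact (hf.le_slope_of_hasDerivWithinAt hx hy hxy (hf' y hy)).trans
      (hf.slope_le_of_hasDerivWithinAt hx hy hxy (hf' x hx))

theorem truncated_drift_le {φ : ℝ → ℝ} {l0 lam κ : ℝ} (hlam : 0 ≤ lam) (hr : 0 ≤ r)
    (hφ : 0 ≤ φ r) :
    (if r ≤ l0 then φ r + lam * r else 0) - (lam - κ) * r ≤ φ r + κ * r := by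
  have : 0 ≤ lam * r := mul_nonneg hlam hr
  split_ifs <;> linarith

theorem rate_mul_add_deriv_mul_drift_le {φ : ℝ → ℝ} {l0 lam κ μ : ℝ} (hlam : 0 ≤ lam)
    (hκ : 0 ≤ κ) (hμ : 0 ≤ μ) (hf : ConcaveOn ℝ (Ici 0) f) (hf0 : f 0 = 0)
    (hderiv : ∀ x ∈ Ici 0, HasDerivWithinAt f (f' x) (Ici 0) x) (hf'r : 0 ≤ f' r)
    (hr : 0 ≤ r) (hφr : 0 ≤ φ r) :
    μ * f r + f' r * ((if r ≤ l0 then φ r + lam * r else 0) - (lam - κ) * r) ≤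
      f' 0 * ((μ + κ) * r + φ r) := by
  have hf_le : f r ≤ f' 0 * r := by
    simpa only [hf0, zero_add, sub_zero] using
      concaveOn_le_add_mul_sub hf self_mem_Ici hr (hderiv 0 self_mem_Ici)
  have hf'_le : f' r ≤ f' 0 :=
    antitoneOn_of_concaveOn_of_hasDerivWithinAt hf hderiv self_mem_Ici hr hr
  calc
    _ ≤ μ * (f' 0 * r) + f' r * (φ r + κ * r) := by
      gcongr
      exact truncated_drift_le hlam hr hφr
    _ ≤ μ * (f' 0 * r) + f' 0 * (φ r + κ * r) := by gcongr
    _ = f' 0 * ((μ + κ) * r + φ r) := by ring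

theorem stmt_4_general {φ h : ℝ → ℝ} {l0 K L lam lamStar ε : ℝ} (hlam : 0 ≤ lam)
    (hKL : 0 ≤ K + L / 2) (hlamStar : 0 ≤ lamStar)
    (hφ0 : 0 ≤ φ 0) (hφmono : MonotoneOn φ (Ici 0))
    (hf : ConcaveOn ℝ (Ici 0) f) (hf0 : f 0 = 0)
    (hderiv : ∀ x ∈ Ici 0, HasDerivWithinAt f (f' x) (Ici 0) x)
    (hf' : ∀ x, 0 ≤ x → 0 ≤ f' x) (hε : 0 ≤ ε)
    (hh : ∀ x, 0 ≤ x → |h x| ≤ 1) (hhcut : ∀ x, 2 * ε ≤ x → h x = 1) (hr : 0 ≤ r) :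
    (lamStar * f r +
        f' r * ((if r ≤ l0 then φ r + lam * r else 0) - (lam - K - L / 2) * r)) *
      (1 - h r ^ 2) ≤
    f' 0 * (2 * (lamStar + K + L / 2) * ε + φ (2 * ε)) := by
  have h2ε : 0 ≤ 2 * ε := by positivity
  have hφ {x : ℝ} (hx : 0 ≤ x) : 0 ≤ φ x := hφ0.trans (hφmono self_mem_Ici hx hx)
  have hrate : 0 ≤ lamStar + (K + L / 2) := add_nonneg hlamStar hKL
  have hf'0 : 0 ≤ f' 0 := hf' 0 le_rfl
  have hbound : 0 ≤ f' 0 * ((lamStar + (K + L / 2)) * (2 * ε) + φ (2 * ε)) :=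
    mul_nonneg hf'0 (add_nonneg (mul_nonneg hrate h2ε) (hφ h2ε))
  have hweight : 0 ≤ 1 - h r ^ 2 := sub_nonneg.2 ((sq_le_one_iff_abs_le_one _).2 (hh r hr))
  rw [show 2 * (lamStar + K + L / 2) * ε = (lamStar + (K + L / 2)) * (2 * ε) by ring,
    sub_sub lam K]
  rcases le_or_gt (2 * ε) r with hrε | hrε
  · simpa only [hhcut r hrε, one_pow, sub_self, mul_zero] using hbound
  · calc
      _ ≤ f' 0 * ((lamStar + (K + L / 2)) * r + φ r) * (1 - h r ^ 2) := by
        gcongr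
        exact rate_mul_add_deriv_mul_drift_le hlam hKL hlamStar hf hf0 hderiv (hf' r hr) hr
          (hφ hr)
      _ ≤ f' 0 * ((lamStar + (K + L / 2)) * (2 * ε) + φ (2 * ε)) * (1 - h r ^ 2) := by
        gcongr
        exact hφmono hr h2ε hrε.le
      _ ≤ f' 0 * ((lamStar + (K + L / 2)) * (2 * ε) + φ (2 * ε)) :=
        mul_le_of_le_one_right hbound (sub_le_self _ (sq_nonneg _))

end ConcaveDistortion

/-- The concave distance distortion used in the reflection coupling, with exponential rate `c1`
and linear part of slope `c2`. -/
noncomputable def expDistortion (c1 c2 r : ℝ) : ℝ := 1 - Real.exp (-c1 * r) + c2 * r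

theorem expDistortion_zero (c1 c2 : ℝ) : expDistortion c1 c2 0 = 0 := by
  simp [expDistortion]

theorem expDistortion_nonneg {c1 c2 r : ℝ} (hc1 : 0 ≤ c1) (hc2 : 0 ≤ c2) (hr : 0 ≤ r) :
    0 ≤ expDistortion c1 c2 r := by
  have hexp : Real.exp (-c1 * r) ≤ 1 :=
    Real.exp_le_one_iff.2 (mul_nonpos_of_nonpos_of_nonneg (neg_nonpos.2 hc1) hr)
  exact add_nonneg (sub_nonneg.2 hexp) (mul_nonneg hc2 hr)

theorem hasDerivAt_expDistortion (c1 c2 r : ℝ) :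
    HasDerivAt (expDistortion c1 c2) (c1 * Real.exp (-c1 * r) + c2) r := by
  have hexp : HasDerivAt (fun x ↦ Real.exp (-c1 * x)) (Real.exp (-c1 * r) * -c1) r :=
    (hasDerivAt_const_mul (-c1)).exp
  exact ((hexp.const_sub 1).add (hasDerivAt_const_mul c2)).congr_deriv (by ring)

theorem concaveOn_expDistortion (c1 c2 : ℝ) : ConcaveOn ℝ univ (expDistortion c1 c2) := by
  have hexp : ConvexOn ℝ univ fun r ↦ Real.exp (-c1 * r) :=
    convexOn_exp.comp_linearMap (LinearMap.mulLeft ℝ (-c1))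
  have hlinear : ConcaveOn ℝ univ fun r ↦ c2 * r :=
    (LinearMap.mulLeft ℝ c2).concaveOn convex_univ
  exact ((concaveOn_const 1 convex_univ).sub hexp).add hlinear

/- Cut-off error bound: with λ* as in the Lyapunov inequality, ε > 0 and
   h : [0,∞) → [0,1] with h(r) = 1 for r ≥ 2ε, for every r ≥ 0,
   (λ*·f(r) + f′(r)·((φ(r) + λ·r)·𝟙_{r ≤ ℓ0} − (λ − K − L/2)·r))·(1 − h(r)²)
     ≤ 2·(c1 + c2)·(2·(λ* + K + L/2)·ε + φ(2ε)). -/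
theorem stmt_4
    (l0 sigma K L lam : ℝ) (φ : ℝ → ℝ)
    (hl0 : 0 < l0) (hsigma : sigma ≠ 0) (hK : 0 ≤ K) (hL : 0 ≤ L)
    (hlam : K + L / 2 < lam)
    (hφ0 : φ 0 = 0) (hφmono : MonotoneOn φ (Set.Ici 0))
    (hφcont : ContinuousOn φ (Set.Ici 0))
    (hφnonneg : ∀ r, 0 ≤ r → 0 ≤ φ r)
    (c1 c2 lamStar : ℝ) (f : ℝ → ℝ)
    (hc1 : c1 = (2 * φ l0 + (L + 2 * K) * l0) / sigma ^ 2)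
    (hc1pos : 0 < c1)
    (hc2 : c2 = c1 * Real.exp (-c1 * l0))
    (hf : ∀ r, f r = 1 - Real.exp (-c1 * r) + c2 * r)
    (hlamStar : lamStar =
      c2 * min (sigma ^ 2 * c1) ((lam - K - L / 2) * l0) /
        (1 - Real.exp (-c1 * l0) + c2 * l0))
    (ε : ℝ) (hε : 0 < ε) (h : ℝ → ℝ)
    (hh0 : ∀ r, 0 ≤ r → 0 ≤ h r) (hh1 : ∀ r, 0 ≤ r → h r ≤ 1)
    (hhcut : ∀ r, 2 * ε ≤ r → h r = 1) :
    ∀ r, 0 ≤ r →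
      (lamStar * f r + (c1 * Real.exp (-c1 * r) + c2) *
          ((if r ≤ l0 then φ r + lam * r else 0) - (lam - K - L / 2) * r)) *
        (1 - (h r) ^ 2)
      ≤ 2 * (c1 + c2) * (2 * (lamStar + K + L / 2) * ε + φ (2 * ε)) := by
  intro r hr
  obtain rfl : f = expDistortion c1 c2 := funext hf
  have hc2_nonneg : 0 ≤ c2 := hc2 ▸ by positivity
  have hlamStar_nonneg : 0 ≤ lamStar := hlamStar ▸
    div_nonneg
      (mul_nonneg hc2_nonneg (le_min (by positivity) (mul_nonneg (by linarith) hl0.le)))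
      (expDistortion_nonneg hc1pos.le hc2_nonneg hl0.le)
  have hconcave : ConcaveOn ℝ (Ici 0) (expDistortion c1 c2) :=
    (concaveOn_expDistortion c1 c2).subset (subset_univ _) (convex_Ici 0)
  have hsharp := stmt_4_general (l0 := l0) (lam := lam) (by linarith)
    (by positivity : 0 ≤ K + L / 2) hlamStar_nonneg hφ0.ge hφmono hconcave
    (expDistortion_zero c1 c2) (fun x _ ↦ (hasDerivAt_expDistortion c1 c2 x).hasDerivWithinAt)
    (fun _ _ ↦ by positivity) hε.le
    (fun x hx ↦ abs_le.2 ⟨by linarith [hh0 x hx], hh1 x hx⟩) hhcut hr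
  simp only [mul_zero, Real.exp_zero, mul_one] at hsharp
  have hφε : 0 ≤ φ (2 * ε) := hφnonneg _ (by positivity)
  rw [mul_assoc 2 (c1 + c2)]
  exact hsharp.trans (le_mul_of_one_le_left (by positivity) one_le_two)
end

section
/- Assume b1 satisfies condition (B1) with rate φ and constants ℓ0 ≥ 0, λ > 0, and b0 satisfies condition (B2) with constant K ≥ 0. Then for every x ∈ ℝ^d and every Borel probability measure μ on ℝ^d with finite first moment, ⟨x, b(x, μ)⟩ ≤ ℓ0·φ(ℓ0) + λ·ℓ0² − (λ − K)·|x|² + |x|·(|b0(0)| + |b1(0)| + K·∫_{ℝ^d} |y| μ(dy)). -/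
open MeasureTheory
open scoped RealInnerProductSpace

/-!
Compare `b1` at `x` and at `0`: beyond distance `ℓ₀` the drift is contracting, and up to distance
`ℓ₀` adding `lam * ℓ₀ ^ 2` pays for the term `-lam * ‖x‖ ^ 2`, so one quadratic bound covers both
regimes. The interaction term is bounded for a single particle at `y`, where Lipschitz continuity
gives linear growth in `x - y`, and this bound is averaged over `y`.
-/

open scoped NNReal

/-- The monotonicity condition (B1) on a vector field `b`: expansion at rate at most `φ` for points
at distance at most `ℓ₀`, contraction at rate `lam` beyond it. Assumptions on `φ`, `ℓ₀` and `lam`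
are kept separate. -/
def IsDissipativeBeyond {E : Type*} [NormedAddCommGroup E] [InnerProductSpace ℝ E]
    (φ : ℝ → ℝ) (ℓ₀ lam : ℝ) (b : E → E) : Prop :=
  ∀ x y, ⟪x - y, b x - b y⟫ ≤
    if ‖x - y‖ ≤ ℓ₀ then ‖x - y‖ * φ ‖x - y‖ else -(lam * ‖x - y‖ ^ 2)

/-- The drift `b(x, μ)` of a McKean–Vlasov equation with confinement `b1` and pairwise interaction
`b0`. The integral is a Bochner integral, hence `0` if `b0 (x - ·)` is not `μ`-integrable. -/
noncomputable def meanFieldDrift {E : Type*} [NormedAddCommGroup E] [NormedSpace ℝ E]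
    [MeasurableSpace E] (b1 b0 : E → E) (x : E) (μ : Measure E) : E :=
  b1 x + ∫ y, b0 (x - y) ∂μ

section Confinement

variable {E : Type*} [NormedAddCommGroup E] [InnerProductSpace ℝ E]
  {φ : ℝ → ℝ} {ℓ₀ lam : ℝ} {b : E → E}

theorem IsDissipativeBeyond.inner_sub_le (hb : IsDissipativeBeyond φ ℓ₀ lam b) (hℓ₀ : 0 ≤ ℓ₀)
    (hlam : 0 ≤ lam) (hφ : MonotoneOn φ (Set.Icc 0 ℓ₀)) (hφ0 : 0 ≤ φ 0) (x y : E) :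
    ⟪x - y, b x - b y⟫ ≤ ℓ₀ * φ ℓ₀ + lam * ℓ₀ ^ 2 - lam * ‖x - y‖ ^ 2 := by
  have hφ_nonneg : ∀ r ∈ Set.Icc 0 ℓ₀, 0 ≤ φ r := fun r hr ↦
    hφ0.trans (hφ (Set.left_mem_Icc.2 hℓ₀) hr hr.1)
  have hℓ₀_mem : ℓ₀ ∈ Set.Icc 0 ℓ₀ := Set.right_mem_Icc.2 hℓ₀
  refine (hb x y).trans ?_
  split_ifs with hxy
  · have hxy_mem : ‖x - y‖ ∈ Set.Icc 0 ℓ₀ := ⟨norm_nonneg _, hxy⟩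
    have hexpand : ‖x - y‖ * φ ‖x - y‖ ≤ ℓ₀ * φ ℓ₀ :=
      mul_le_mul hxy (hφ hxy_mem hℓ₀_mem hxy) (hφ_nonneg _ hxy_mem) hℓ₀
    have hquad : lam * ‖x - y‖ ^ 2 ≤ lam * ℓ₀ ^ 2 := by gcongr
    linarith
  · have hexpand : 0 ≤ ℓ₀ * φ ℓ₀ := mul_nonneg hℓ₀ (hφ_nonneg ℓ₀ hℓ₀_mem)
    have hquad : 0 ≤ lam * ℓ₀ ^ 2 := by positivity
    linarith

theorem IsDissipativeBeyond.inner_self_apply_le (hb : IsDissipativeBeyond φ ℓ₀ lam b)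
    (hℓ₀ : 0 ≤ ℓ₀) (hlam : 0 ≤ lam) (hφ : MonotoneOn φ (Set.Icc 0 ℓ₀)) (hφ0 : 0 ≤ φ 0) (x : E) :
    ⟪x, b x⟫ ≤ ℓ₀ * φ ℓ₀ + lam * ℓ₀ ^ 2 - lam * ‖x‖ ^ 2 + ‖x‖ * ‖b 0‖ :=
  calc ⟪x, b x⟫ = ⟪x - 0, b x - b 0⟫ + ⟪x, b 0⟫ := by
        rw [sub_zero, ← inner_add_right, sub_add_cancel]
    _ ≤ ℓ₀ * φ ℓ₀ + lam * ℓ₀ ^ 2 - lam * ‖x - 0‖ ^ 2 + ‖x‖ * ‖b 0‖ :=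
        add_le_add (hb.inner_sub_le hℓ₀ hlam hφ hφ0 x 0) (real_inner_le_norm x (b 0))
    _ = ℓ₀ * φ ℓ₀ + lam * ℓ₀ ^ 2 - lam * ‖x‖ ^ 2 + ‖x‖ * ‖b 0‖ := by rw [sub_zero]

end Confinement

section Interaction

theorem norm_apply_le_of_lipschitzWith {E F : Type*} [SeminormedAddCommGroup E]
    [SeminormedAddCommGroup F] {K : ℝ≥0} {f : E → F} (hf : LipschitzWith K f) (x : E) :
    ‖f x‖ ≤ ‖f 0‖ + K * ‖x‖ :=
  calc ‖f x‖ ≤ ‖f 0‖ + ‖f x - f 0‖ := norm_le_insert' _ _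
    _ ≤ ‖f 0‖ + K * ‖x‖ := by
        gcongr
        simpa only [sub_zero] using hf.norm_sub_le x 0

theorem integrable_comp_of_lipschitzWith {α E F : Type*} [MeasurableSpace α]
    [NormedAddCommGroup E] [NormedAddCommGroup F] {μ : Measure α} [IsFiniteMeasure μ] {K : ℝ≥0}
    {f : E → F} (hf : LipschitzWith K f) {g : α → E} (hg : Integrable g μ) :
    Integrable (fun a ↦ f (g a)) μ :=
  ((integrable_const ‖f 0‖).add (hg.norm.const_mul K)).mono'
    (hf.continuous.comp_aestronglyMeasurable hg.aestronglyMeasurable)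
    (.of_forall fun a ↦ norm_apply_le_of_lipschitzWith hf (g a))

variable {E : Type*} [NormedAddCommGroup E] [InnerProductSpace ℝ E] {K : ℝ≥0} {b : E → E}

theorem inner_apply_sub_le_of_lipschitzWith (hb : LipschitzWith K b) (x y : E) :
    ⟪x, b (x - y)⟫ ≤ K * ‖x‖ ^ 2 + ‖x‖ * (‖b 0‖ + K * ‖y‖) :=
  calc ⟪x, b (x - y)⟫ ≤ ‖x‖ * ‖b (x - y)‖ := real_inner_le_norm _ _
    _ ≤ ‖x‖ * (‖b 0‖ + K * ‖x - y‖) := by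
        gcongr
        exact norm_apply_le_of_lipschitzWith hb (x - y)
    _ ≤ ‖x‖ * (‖b 0‖ + K * (‖x‖ + ‖y‖)) := by
        gcongr
        exact norm_sub_le x y
    _ = K * ‖x‖ ^ 2 + ‖x‖ * (‖b 0‖ + K * ‖y‖) := by ring

theorem inner_integral_sub_le_of_lipschitzWith [CompleteSpace E] [MeasurableSpace E]
    {μ : Measure E} [IsProbabilityMeasure μ] (hb : LipschitzWith K b)
    (hμ : Integrable (fun y ↦ y) μ) (x : E) :
    ⟪x, ∫ y, b (x - y) ∂μ⟫ ≤ K * ‖x‖ ^ 2 + ‖x‖ * (‖b 0‖ + K * ∫ y, ‖y‖ ∂μ) := by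
  have hb_int : Integrable (fun y ↦ b (x - y)) μ :=
    integrable_comp_of_lipschitzWith hb ((integrable_const x).sub hμ)
  have hmoment : Integrable (fun y ↦ K * ‖y‖) μ := hμ.norm.const_mul K
  have hlinear : Integrable (fun y ↦ ‖x‖ * (‖b 0‖ + K * ‖y‖)) μ :=
    ((integrable_const _).add hmoment).const_mul _
  calc ⟪x, ∫ y, b (x - y) ∂μ⟫ = ∫ y, ⟪x, b (x - y)⟫ ∂μ := (integral_inner hb_int x).symm
    _ ≤ ∫ y, K * ‖x‖ ^ 2 + ‖x‖ * (‖b 0‖ + K * ‖y‖) ∂μ :=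
        integral_mono (hb_int.const_inner x) ((integrable_const _).add hlinear)
          (inner_apply_sub_le_of_lipschitzWith hb x)
    _ = K * ‖x‖ ^ 2 + ‖x‖ * (‖b 0‖ + K * ∫ y, ‖y‖ ∂μ) := by
        rw [integral_add (integrable_const _) hlinear, integral_const_mul ‖x‖,
          integral_add (integrable_const _) hmoment]
        simp only [integral_const, integral_const_mul, probReal_univ, one_smul]

end Interaction

theorem stmt_5_general {E : Type*} [NormedAddCommGroup E] [InnerProductSpace ℝ E]
    [CompleteSpace E] [MeasurableSpace E] {b1 b0 : E → E} {φ : ℝ → ℝ} {ℓ₀ lam : ℝ} {K : ℝ≥0}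
    (hb1 : IsDissipativeBeyond φ ℓ₀ lam b1) (hb0 : LipschitzWith K b0) (hℓ₀ : 0 ≤ ℓ₀)
    (hlam : 0 ≤ lam) (hφ : MonotoneOn φ (Set.Icc 0 ℓ₀)) (hφ0 : 0 ≤ φ 0)
    {μ : Measure E} [IsProbabilityMeasure μ] (hμ : Integrable (fun y ↦ y) μ) (x : E) :
    ⟪x, meanFieldDrift b1 b0 x μ⟫ ≤
      ℓ₀ * φ ℓ₀ + lam * ℓ₀ ^ 2 - (lam - K) * ‖x‖ ^ 2
        + ‖x‖ * (‖b0 0‖ + ‖b1 0‖ + K * ∫ y, ‖y‖ ∂μ) := by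
  have hconfine := hb1.inner_self_apply_le hℓ₀ hlam hφ hφ0 x
  have hinteract := inner_integral_sub_le_of_lipschitzWith hb0 hμ x
  rw [meanFieldDrift, inner_add_right]
  linarith

/- Drift dissipativity estimate (R*): under conditions (B1) and (B2), for all x and
   all probability measures μ with finite first moment,
   ⟨x, b(x,μ)⟩ ≤ ℓ0·φ(ℓ0) + λ·ℓ0² − (λ − K)·|x|² + |x|·(|b0(0)| + |b1(0)| + K·μ(|·|)). -/
theorem stmt_5 (d : ℕ) (hd : 1 ≤ d)
    (b1 b0 : EuclideanSpace ℝ (Fin d) → EuclideanSpace ℝ (Fin d))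
    (hb1m : Measurable b1) (hb0m : Measurable b0)
    (φ : ℝ → ℝ) (l0 lam K : ℝ)
    (hl0 : 0 ≤ l0) (hlam : 0 < lam) (hK : 0 ≤ K)
    (hφ0 : φ 0 = 0) (hφmono : MonotoneOn φ (Set.Ici 0))
    (hφnonneg : ∀ r, 0 ≤ r → 0 ≤ φ r)
    (hB1 : ∀ x y : EuclideanSpace ℝ (Fin d),
      ⟪x - y, b1 x - b1 y⟫ ≤
        (if ‖x - y‖ ≤ l0 then ‖x - y‖ * φ ‖x - y‖ else -(lam * ‖x - y‖ ^ 2)))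
    (hB2 : ∀ x y : EuclideanSpace ℝ (Fin d), ‖b0 x - b0 y‖ ≤ K * ‖x - y‖)
    (x : EuclideanSpace ℝ (Fin d)) (μ : Measure (EuclideanSpace ℝ (Fin d)))
    [IsProbabilityMeasure μ] (hμ1 : Integrable (fun y => ‖y‖) μ) :
    ⟪x, b1 x + ∫ y, b0 (x - y) ∂μ⟫ ≤
      l0 * φ l0 + lam * l0 ^ 2 - (lam - K) * ‖x‖ ^ 2
        + ‖x‖ * (‖b0 0‖ + ‖b1 0‖ + K * ∫ y, ‖y‖ ∂μ) := by
  lift K to ℝ≥0 using hK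
  exact stmt_5_general hB1 (lipschitzWith_iff_norm_sub_le.2 hB2) hl0 hlam.le
    (hφmono.mono Set.Icc_subset_Ici_self) hφ0.ge
    ((integrable_norm_iff aestronglyMeasurable_id).1 hμ1) x
end

section
/- Assume b1 satisfies condition (B1) with rate φ(r) = λ0·r for some λ0 > 0 and constants ℓ0 ≥ 0, λ > 0 with λ > 2K, and b0 satisfies condition (B2) with constant K ≥ 0; let σ ∈ ℝ. Then there exists a constant C0 > 0 such that for every δ > 0, all x, Δ, y ∈ ℝ^d, and every Borel probability measure μ on ℝ^d with finite second moment satisfying the implicit backward Euler relation y = x + δ·b(y, μ) + σ·Δ, one has (1 + (3λ − 4K)·δ/2)·|y|² ≤ |x|² + K·δ·∫_{ℝ^d} |z|² μ(dz) + 2·C0·δ + σ²·|Δ|² + 2σ·⟨Δ, x⟩. -/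
open MeasureTheory
open scoped RealInnerProductSpace

/-!
Pairing the implicit relation `y - δ • b(y, μ) = x + σ • Δ` with `y` gives
`‖y‖² ≤ ‖x + σ • Δ‖² + 2δ⟪y, b(y, μ)⟫`. The confining drift contributes `-2λ‖y‖²` to
`2⟪y, b(y, μ)⟫` and the interaction at most `3K‖y‖² + K ∫ ‖z‖² dμ`, each up to
terms affine in `‖y‖`. Since `3K - 2λ = -(3λ - 4K)/2 - (λ/2 - K)`, Young's inequality absorbs
the linear terms into the spare `-(λ/2 - K)‖y‖²`.
-/

theorem two_mul_mul_le_mul_sq_add_sq_div {c : ℝ} (hc : 0 < c) (a r : ℝ) :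
    2 * (a * r) ≤ c * r ^ 2 + a ^ 2 / c := by
  have hsq : 0 ≤ (c * r - a) ^ 2 / c := by positivity
  have hexpand : (c * r - a) ^ 2 / c = c * r ^ 2 + a ^ 2 / c - 2 * (a * r) := by
    field_simp
    ring
  linarith

theorem norm_le_norm_zero_add_of_norm_sub_le {E F : Type*} [NormedAddCommGroup E]
    [NormedAddCommGroup F] {f : E → F} {K : ℝ} (hf : ∀ x y, ‖f x - f y‖ ≤ K * ‖x - y‖) (x : E) :
    ‖f x‖ ≤ ‖f 0‖ + K * ‖x‖ := by
  have h := hf x 0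
  rw [sub_zero] at h
  linarith [norm_le_norm_add_norm_sub' (f x) (f 0)]

section

variable {E : Type*} [NormedAddCommGroup E] [InnerProductSpace ℝ E]

theorem norm_sq_le_norm_sub_sq_add_two_mul_inner (y v : E) :
    ‖y‖ ^ 2 ≤ ‖y - v‖ ^ 2 + 2 * ⟪y, v⟫ := by
  linarith [norm_sub_sq_real y v, sq_nonneg ‖v‖]

theorem norm_add_smul_sq_real (x u : E) (s : ℝ) :
    ‖x + s • u‖ ^ 2 = ‖x‖ ^ 2 + s ^ 2 * ‖u‖ ^ 2 + 2 * s * ⟪u, x⟫ := by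
  rw [norm_add_sq_real, real_inner_smul_right, real_inner_comm, norm_smul, mul_pow,
    Real.norm_eq_abs, sq_abs]
  ring

theorem inner_self_le_of_inner_sub_zero_le_ite {b : E → E} {φ : ℝ → ℝ} {l₀ lam : ℝ}
    (hφ : MonotoneOn φ (Set.Icc 0 l₀)) (hφ₀ : 0 ≤ φ 0) (hl₀ : 0 ≤ l₀) (hlam : 0 ≤ lam)
    (hb : ∀ x, ⟪x, b x - b 0⟫ ≤ if ‖x‖ ≤ l₀ then ‖x‖ * φ ‖x‖ else -(lam * ‖x‖ ^ 2)) (x : E) :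
    ⟪x, b x⟫ ≤ -(lam * ‖x‖ ^ 2) + ‖b 0‖ * ‖x‖ + (l₀ * φ l₀ + lam * l₀ ^ 2) := by
  have hφl₀ : 0 ≤ φ l₀ := hφ₀.trans (hφ ⟨le_rfl, hl₀⟩ ⟨hl₀, le_rfl⟩ hl₀)
  have hzero : ⟪x, b 0⟫ ≤ ‖b 0‖ * ‖x‖ := (real_inner_le_norm x (b 0)).trans_eq (mul_comm _ _)
  have hbx := hb x
  rw [inner_sub_right] at hbx
  split_ifs at hbx with hx
  · have hrate : ‖x‖ * φ ‖x‖ ≤ l₀ * φ l₀ :=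
      mul_le_mul_of_nonneg hx (hφ ⟨norm_nonneg x, hx⟩ ⟨hl₀, le_rfl⟩ hx) (norm_nonneg x) hφl₀
    have hsq : lam * ‖x‖ ^ 2 ≤ lam * l₀ ^ 2 := by gcongr
    linarith
  · have hconst : 0 ≤ l₀ * φ l₀ + lam * l₀ ^ 2 := by positivity
    linarith

theorem inner_comp_sub_left_le_of_norm_le_add_mul_norm {f : E → E} {B K : ℝ} (hK : 0 ≤ K)
    (hf : ∀ x, ‖f x‖ ≤ B + K * ‖x‖) (y z : E) :
    ⟪y, f (y - z)⟫ ≤ (B * ‖y‖ + 3 * K / 2 * ‖y‖ ^ 2) + K / 2 * ‖z‖ ^ 2 :=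
  calc ⟪y, f (y - z)⟫ ≤ ‖y‖ * ‖f (y - z)‖ := real_inner_le_norm _ _
    _ ≤ ‖y‖ * (B + K * (‖y‖ + ‖z‖)) := by
      gcongr
      exact (hf _).trans (by gcongr; exact norm_sub_le y z)
    _ = B * ‖y‖ + K * ‖y‖ ^ 2 + K / 2 * (2 * ‖y‖ * ‖z‖) := by ring
    _ ≤ B * ‖y‖ + K * ‖y‖ ^ 2 + K / 2 * (‖y‖ ^ 2 + ‖z‖ ^ 2) := by
      gcongr
      exact two_mul_le_add_sq ‖y‖ ‖z‖
    _ = (B * ‖y‖ + 3 * K / 2 * ‖y‖ ^ 2) + K / 2 * ‖z‖ ^ 2 := by ring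

end

section

variable {E : Type*} [NormedAddCommGroup E] [MeasurableSpace E] [BorelSpace E]

theorem integrable_comp_sub_left_of_norm_le_add_mul_norm {F : Type*} [NormedAddCommGroup F]
    {f : E → F} {B K : ℝ} (hfm : StronglyMeasurable f) (hK : 0 ≤ K)
    (hf : ∀ x, ‖f x‖ ≤ B + K * ‖x‖) {μ : Measure E} [IsFiniteMeasure μ]
    (hμ : Integrable (fun z => ‖z‖) μ) (y : E) : Integrable (fun z => f (y - z)) μ := by
  have hmeas : StronglyMeasurable fun z => f (y - z) :=
    hfm.comp_measurable (continuous_const.sub continuous_id).measurable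
  have hbound : Integrable (fun z => B + K * (‖y‖ + ‖z‖)) μ :=
    (integrable_const B).add (((integrable_const ‖y‖).add hμ).const_mul K)
  refine hbound.mono' hmeas.aestronglyMeasurable (.of_forall fun z => (hf _).trans ?_)
  gcongr
  exact norm_sub_le y z

variable [InnerProductSpace ℝ E] [CompleteSpace E]

theorem inner_integral_comp_sub_left_le_of_norm_le_add_mul_norm {f : E → E} {B K : ℝ}
    (hfm : StronglyMeasurable f) (hK : 0 ≤ K) (hf : ∀ x, ‖f x‖ ≤ B + K * ‖x‖) {μ : Measure E}
    [IsProbabilityMeasure μ] (hμ : Integrable (fun z => ‖z‖ ^ 2) μ) (y : E) :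
    ⟪y, ∫ z, f (y - z) ∂μ⟫ ≤
      B * ‖y‖ + 3 * K / 2 * ‖y‖ ^ 2 + K / 2 * ∫ z, ‖z‖ ^ 2 ∂μ := by
  have hnorm : Integrable (fun z => ‖z‖) μ :=
    ((memLp_two_iff_integrable_sq measurable_norm.aestronglyMeasurable).2 hμ).integrable
      one_le_two
  have hconv := integrable_comp_sub_left_of_norm_le_add_mul_norm hfm hK hf hnorm y
  have hsq : Integrable (fun z => K / 2 * ‖z‖ ^ 2) μ := hμ.const_mul _
  calc ⟪y, ∫ z, f (y - z) ∂μ⟫ = ∫ z, ⟪y, f (y - z)⟫ ∂μ := (integral_inner hconv y).symm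
    _ ≤ ∫ z, ((B * ‖y‖ + 3 * K / 2 * ‖y‖ ^ 2) + K / 2 * ‖z‖ ^ 2) ∂μ :=
      integral_mono (hconv.const_inner y) ((integrable_const _).add hsq)
        (inner_comp_sub_left_le_of_norm_le_add_mul_norm hK hf y)
    _ = B * ‖y‖ + 3 * K / 2 * ‖y‖ ^ 2 + K / 2 * ∫ z, ‖z‖ ^ 2 ∂μ := by
      rw [integral_add (integrable_const _) hsq, integral_const_mul, integral_const,
        probReal_univ, one_smul]

theorem stmt_9_general {b1 b0 : E → E} {a A B lam K : ℝ} (hb0m : StronglyMeasurable b0)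
    (hK : 0 ≤ K) (hlamK : 2 * K < lam)
    (hb1 : ∀ x, ⟪x, b1 x⟫ ≤ -(lam * ‖x‖ ^ 2) + a * ‖x‖ + A)
    (hb0 : ∀ x, ‖b0 x‖ ≤ B + K * ‖x‖) :
    ∃ C0 : ℝ, 0 < C0 ∧
      ∀ sigma δ : ℝ, 0 < δ →
      ∀ (x Δ y : E) (μ : Measure E),
        IsProbabilityMeasure μ → Integrable (fun z => ‖z‖ ^ 2) μ →
        y = x + δ • (b1 y + ∫ z, b0 (y - z) ∂μ) + sigma • Δ →
        (1 + (3 * lam - 4 * K) * δ / 2) * ‖y‖ ^ 2 ≤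
          ‖x‖ ^ 2 + K * δ * (∫ z, ‖z‖ ^ 2 ∂μ) + 2 * C0 * δ
            + sigma ^ 2 * ‖Δ‖ ^ 2 + 2 * sigma * ⟪Δ, x⟫ := by
  have hgap : 0 < lam / 2 - K := by linarith
  refine ⟨(a + B) ^ 2 / (lam / 2 - K) / 2 + |A| + 1, by positivity, ?_⟩
  intro sigma δ hδ x Δ y μ _ hμ hy
  set J := ∫ z, b0 (y - z) ∂μ
  have hstep : ‖y‖ ^ 2 ≤ ‖x + sigma • Δ‖ ^ 2 + δ * (2 * (⟪y, b1 y⟫ + ⟪y, J⟫)) := by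
    have h := norm_sq_le_norm_sub_sq_add_two_mul_inner y (δ • (b1 y + J))
    have hexplicit : y - δ • (b1 y + J) = x + sigma • Δ := by
      rw [sub_eq_iff_eq_add, add_right_comm]
      exact hy
    rw [hexplicit, real_inner_smul_right, inner_add_right] at h
    linarith
  have hdrift : 2 * (⟪y, b1 y⟫ + ⟪y, J⟫) ≤
      -((3 * lam - 4 * K) / 2) * ‖y‖ ^ 2 + K * (∫ z, ‖z‖ ^ 2 ∂μ)
        + 2 * ((a + B) ^ 2 / (lam / 2 - K) / 2 + |A| + 1) := by
    have hinteraction := inner_integral_comp_sub_left_le_of_norm_le_add_mul_norm hb0m hK hb0 hμ y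
    have hyoung := two_mul_mul_le_mul_sq_add_sq_div hgap (a + B) ‖y‖
    linarith [hb1 y, le_abs_self A]
  rw [norm_add_smul_sq_real] at hstep
  linarith [mul_le_mul_of_nonneg_left hdrift hδ.le]

end

/- Per-step Lyapunov contraction for the backward Euler–Maruyama scheme (HB3):
   there is C0 > 0 such that whenever y = x + δ·b(y, μ) + σ·Δ,
   (1 + (3λ − 4K)δ/2)|y|² ≤ |x|² + Kδ·μ(|·|²) + 2C0δ + σ²|Δ|² + 2σ⟨Δ, x⟩. -/
theorem stmt_9 (d : ℕ) (hd : 1 ≤ d)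
    (b1 b0 : EuclideanSpace ℝ (Fin d) → EuclideanSpace ℝ (Fin d))
    (hb1m : Measurable b1) (hb0m : Measurable b0)
    (lam0 l0 lam K sigma : ℝ)
    (hlam0 : 0 < lam0) (hl0 : 0 ≤ l0) (hlam : 0 < lam) (hK : 0 ≤ K)
    (hlamK : 2 * K < lam)
    (hB1 : ∀ x y : EuclideanSpace ℝ (Fin d),
      ⟪x - y, b1 x - b1 y⟫ ≤
        (if ‖x - y‖ ≤ l0 then lam0 * ‖x - y‖ ^ 2 else -(lam * ‖x - y‖ ^ 2)))
    (hB2 : ∀ x y : EuclideanSpace ℝ (Fin d), ‖b0 x - b0 y‖ ≤ K * ‖x - y‖) :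
    ∃ C0 : ℝ, 0 < C0 ∧
      ∀ δ : ℝ, 0 < δ →
      ∀ (x Δ y : EuclideanSpace ℝ (Fin d))
        (μ : Measure (EuclideanSpace ℝ (Fin d))),
        IsProbabilityMeasure μ → Integrable (fun z => ‖z‖ ^ 2) μ →
        y = x + δ • (b1 y + ∫ z, b0 (y - z) ∂μ) + sigma • Δ →
        (1 + (3 * lam - 4 * K) * δ / 2) * ‖y‖ ^ 2 ≤
          ‖x‖ ^ 2 + K * δ * (∫ z, ‖z‖ ^ 2 ∂μ) + 2 * C0 * δ
            + sigma ^ 2 * ‖Δ‖ ^ 2 + 2 * sigma * ⟪Δ, x⟫ := by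
  have hdiss := inner_self_le_of_inner_sub_zero_le_ite (b := b1) (φ := (lam0 * ·))
    (fun _ _ _ _ h => mul_le_mul_of_nonneg_left h hlam0.le) (mul_zero lam0).ge hl0 hlam.le
    (fun x => by simpa only [sub_zero, pow_two, mul_left_comm] using hB1 x 0)
  obtain ⟨C0, hC0, hbound⟩ := stmt_9_general hb0m.stronglyMeasurable hK hlamK hdiss
    (norm_le_norm_zero_add_of_norm_sub_le hB2)
  exact ⟨C0, hC0, hbound sigma⟩
end

section
/- Let ℓ ≥ 3 be an odd integer and define b1 : ℝ → ℝ by b1(x) := x − x^ℓ. Then there exist constants λ, C, λ̂, Ĉ, α, R > 0 such that for all x ∈ ℝ: x·b1(x) ≤ −λ·x²·|b1′(x)| + C, |b1(x)| ≤ λ̂·|x|·|b1′(x)| + Ĉ, and |b1′(x)| ≥ α whenever |x| ≥ R, where b1′(x) = 1 − ℓ·x^{ℓ−1}. -/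
/-! Write `p = x ^ (ℓ - 1) ≥ 0`, so that `x * b1 x = x ^ 2 * (1 - p)` and `b1′ x = 1 - ℓ * p`.
Whenever `λ * ℓ < 1`, the term `-p` dominates `λ * |b1′ x| ≤ λ + λ * ℓ * p`. This leaves a negative
multiple of `x ^ 2 * p`, which beats every multiple of `x ^ 2` because `x ^ 2 ≤ p + 1`.
For the growth bound, `|1 - p| ≤ |1 - ℓ * p|` can only fail for `0 < p < 1`; then `|x| < 1`, and
`|b1 x| ≤ 1`. -/

section OrderedRing

variable {K : Type*} [CommRing K] [LinearOrder K] [IsStrictOrderedRing K] {a x : K}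

theorem pow_le_pow_add_one_of_nonneg (hx : 0 ≤ x) {m n : ℕ} (hmn : m ≤ n) :
    x ^ m ≤ x ^ n + 1 := by
  rcases le_total x 1 with hx1 | hx1
  · exact (pow_le_one₀ hx hx1).trans (le_add_of_nonneg_left (pow_nonneg hx n))
  · exact (pow_le_pow_right₀ hx1 hmn).trans (le_add_of_nonneg_right zero_le_one)

theorem sub_one_le_abs_one_sub_mul_pow (ha : 0 ≤ a) (hx : 1 ≤ |x|) (n : ℕ) :
    a - 1 ≤ |1 - a * x ^ n| :=
  calc
    a - 1 ≤ a * |x| ^ n - 1 := sub_le_sub_right (le_mul_of_one_le_right ha (one_le_pow₀ hx)) 1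
    _ = |a * x ^ n| - |1| := by rw [abs_mul, abs_pow, abs_of_nonneg ha, abs_one]
    _ ≤ |a * x ^ n - 1| := abs_sub_abs_le_abs_sub _ _
    _ = |1 - a * x ^ n| := abs_sub_comm _ _

theorem abs_one_sub_le_abs_one_sub_mul {p : K} (ha : 1 ≤ a) (hp : p ≤ 0 ∨ 1 ≤ p) :
    |1 - p| ≤ |1 - a * p| := by
  rcases hp with hp | hp
  · have hap : a * p ≤ p := mul_le_of_one_le_left hp ha
    rw [abs_of_nonneg (by linarith), abs_of_nonneg (by linarith)]
    linarith
  · have hap : p ≤ a * p := le_mul_of_one_le_left (zero_le_one.trans hp) ha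
    rw [abs_of_nonpos (by linarith), abs_of_nonpos (by linarith)]
    linarith

theorem abs_sub_pow_succ_le (ha : 1 ≤ a) (x : K) (n : ℕ) :
    |x - x ^ (n + 1)| ≤ |x| * |1 - a * x ^ n| + 1 := by
  have hfactor : |x - x ^ (n + 1)| = |x| * |1 - x ^ n| := by
    rw [← abs_mul]; ring_nf
  rw [hfactor]
  by_cases hp : x ^ n ≤ 0 ∨ 1 ≤ x ^ n
  · have hgrad := mul_le_mul_of_nonneg_left (abs_one_sub_le_abs_one_sub_mul ha hp) (abs_nonneg x)
    exact hgrad.trans (le_add_of_nonneg_right zero_le_one)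
  · obtain ⟨hpos, hlt⟩ := not_or.mp hp
    rw [not_le] at hpos hlt
    have hx : |x| ≤ 1 := by
      by_contra! hx
      have hpow : 1 ≤ |x ^ n| := abs_pow x n ▸ one_le_pow₀ hx.le
      exact hlt.not_ge (abs_of_pos hpos ▸ hpow)
    have hdiff : |1 - x ^ n| ≤ 1 := by
      rw [abs_of_pos (sub_pos.mpr hlt)]
      exact sub_le_self 1 hpos.le
    exact (mul_le_one₀ hx (abs_nonneg _) hdiff).trans (le_add_of_nonneg_left (by positivity))

end OrderedRing

section OrderedField

variable {K : Type*} [Field K] [LinearOrder K] [IsStrictOrderedRing K]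

theorem mul_sub_mul_le_sq_div_four_mul {d : K} (hd : 0 < d) (c t : K) :
    t * (c - d * t) ≤ c ^ 2 / (4 * d) := by
  rw [le_div_iff₀ (by positivity)]
  linarith [sq_nonneg (2 * d * t - c)]

theorem mul_sub_pow_succ_le {a lam : K} (ha : 0 ≤ a) (hlam : 0 ≤ lam) (hlam_a : lam * a < 1)
    {n : ℕ} (hn : Even n) (hn2 : 2 ≤ n) (x : K) :
    x * (x - x ^ (n + 1)) ≤
      -lam * x ^ 2 * |1 - a * x ^ n| + (2 + lam - lam * a) ^ 2 / (4 * (1 - lam * a)) := by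
  have hd : 0 < 1 - lam * a := sub_pos.mpr hlam_a
  have hgrad : |1 - a * x ^ n| ≤ 1 + a * x ^ n := by
    have hap : 0 ≤ a * x ^ n := mul_nonneg ha (hn.pow_nonneg x)
    exact abs_le.mpr ⟨by linarith, by linarith⟩
  have hsq : x ^ 2 ≤ x ^ n + 1 := by
    simpa only [sq_abs, hn.pow_abs] using pow_le_pow_add_one_of_nonneg (abs_nonneg x) hn2
  have hsum : x * (x - x ^ (n + 1)) + lam * x ^ 2 * |1 - a * x ^ n| ≤
      (2 + lam - lam * a) ^ 2 / (4 * (1 - lam * a)) :=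
    calc
      _ ≤ x * (x - x ^ (n + 1)) + lam * x ^ 2 * (1 + a * x ^ n) := by gcongr
      _ = x ^ 2 * (2 + lam - lam * a - (1 - lam * a) * (x ^ n + 1)) := by ring
      _ ≤ x ^ 2 * (2 + lam - lam * a - (1 - lam * a) * x ^ 2) := by gcongr
      _ ≤ _ := mul_sub_mul_le_sq_div_four_mul hd _ _
  linarith

end OrderedField

/- For b1(x) = x − x^ℓ with ℓ ≥ 3 odd, the structural conditions (A1′) hold:
   gradient-weighted dissipativity, gradient-weighted growth, and a uniform lower
   bound on |b1′(x)| = |1 − ℓx^{ℓ−1}| outside a compact set. -/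
theorem stmt_16 (ℓ : ℕ) (hodd : Odd ℓ) (hℓ : 3 ≤ ℓ) :
    ∃ lam C lamhat Chat α R : ℝ,
      0 < lam ∧ 0 < C ∧ 0 < lamhat ∧ 0 < Chat ∧ 0 < α ∧ 0 < R ∧
      ∀ x : ℝ,
        x * (x - x ^ ℓ) ≤ -lam * x ^ 2 * |1 - (ℓ : ℝ) * x ^ (ℓ - 1)| + C ∧
        |x - x ^ ℓ| ≤ lamhat * |x| * |1 - (ℓ : ℝ) * x ^ (ℓ - 1)| + Chat ∧
        (R ≤ |x| → α ≤ |1 - (ℓ : ℝ) * x ^ (ℓ - 1)|) := by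
  obtain ⟨k, rfl⟩ := hodd
  rw [Nat.add_sub_cancel]
  have hℓ_real : (3 : ℝ) ≤ (2 * k + 1 : ℕ) := by exact_mod_cast hℓ
  generalize ((2 * k + 1 : ℕ) : ℝ) = L at hℓ_real ⊢
  have hL : 0 ≤ L := by linarith
  obtain ⟨lam, hlam, hL_lam⟩ := exists_pos_mul_lt one_pos L
  rw [mul_comm] at hL_lam
  have hC : 0 < (2 + lam - lam * L) ^ 2 / (4 * (1 - lam * L)) :=
    div_pos (pow_pos (by linarith) 2) (by linarith)
  refine ⟨lam, _, 1, 1, L - 1, 1, hlam, hC, one_pos, one_pos, by linarith, one_pos,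
    fun x ↦ ⟨?dissipativity, ?growth, ?nondegeneracy⟩⟩
  case dissipativity =>
    exact mul_sub_pow_succ_le hL hlam.le hL_lam (even_two_mul k) (by omega) x
  case growth => simpa only [one_mul] using abs_sub_pow_succ_le (by linarith) x (2 * k)
  case nondegeneracy => exact fun hx ↦ sub_one_le_abs_one_sub_mul_pow hL hx (2 * k)
end
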